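/- Let Γ be a finitely generated virtually abelian group and let μ be a probability measure on Γ with finite second moment whose support generates Γ as a semigroup. If there exists a nonzero group homomorphism from Γ to ℤ, then the limit, as ρ tends to 0 with ρ ∈ (0,1], of liminf_{n→∞} ‖π^ρ_n − μ_n×μ_n‖_TV equals 1; in particular, it is not the case that for every ρ ∈ (0,1], ‖π^ρ_n − μ_n×μ_n‖_TV → 0 as n → ∞. -/

import Mathlib

open scoped BigOperators Classical
open Filter Matrix MeasureTheory

namespace NSVA

noncomputable section

/-- Convolution of two real-valued functions on a group. -/
def conv {G : Type*} [Group G] (μ ν : G → ℝ) : G → ℝ :=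
  fun g => ∑' h : G, μ h * ν (h⁻¹ * g)

/-- Convolution powers: `convPow μ 0 = δ_1`, `convPow μ (n+1) = (convPow μ n) * μ`. -/
def convPow {G : Type*} [Group G] (μ : G → ℝ) : ℕ → G → ℝ
  | 0 => fun g => if g = 1 then 1 else 0
  | n + 1 => conv (convPow μ n) μ

/-- A probability measure on a countable set, viewed as a function. -/
def IsProb {G : Type*} (μ : G → ℝ) : Prop := (∀ g, 0 ≤ μ g) ∧ HasSum μ 1

/-- The support of `μ` generates the group as a semigroup. -/
def Nondeg {G : Type*} [Group G] (μ : G → ℝ) : Prop :=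
  ∀ g : G, g ∈ Subsemigroup.closure {x : G | 0 < μ x}

/-- `μ` is aperiodic: `μ_n(1) > 0` for all large enough `n`. -/
def Aperiodic {G : Type*} [Group G] (μ : G → ℝ) : Prop :=
  ∃ N : ℕ, ∀ n : ℕ, N ≤ n → 0 < convPow μ n 1

/-- Total variation distance between two (probability) functions. -/
def tv {Z : Type*} (p q : Z → ℝ) : ℝ := (1 / 2) * ∑' z : Z, |p z - q z|

/-- Word length with respect to a finite set `S₀`. -/
def wordLength {G : Type*} [Group G] (S₀ : Finset G) (g : G) : ℕ :=
  sInf {n : ℕ | ∃ l : List G, (∀ s ∈ l, s ∈ S₀) ∧ l.length = n ∧ l.prod = g}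

/-- Finite second moment with respect to a word metric given by a finite symmetric
generating set. -/
def FinSecondMoment {G : Type*} [Group G] (μ : G → ℝ) : Prop :=
  ∃ S₀ : Finset G, (∀ s ∈ S₀, s⁻¹ ∈ S₀) ∧ Subgroup.closure (S₀ : Set G) = ⊤ ∧
    Summable (fun g : G => (wordLength S₀ g : ℝ) ^ 2 * μ g)

/-- A group is virtually abelian if it has an abelian subgroup of finite index. -/
def VirtAbelian (G : Type*) [Group G] : Prop :=
  ∃ A : Subgroup G, A.index ≠ 0 ∧ ∀ a b : A, a * b = b * a

/-- The noised measure `π^ρ` on `G × G`. -/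
def noised {G : Type*} (μ : G → ℝ) (ρ : ℝ) : G × G → ℝ :=
  fun p => ρ * μ p.1 * μ p.2 + (1 - ρ) * μ p.1 * (if p.1 = p.2 then 1 else 0)

/-- First marginal of a measure on a product. -/
def marg1 {G₁ G₂ : Type*} (ν : G₁ × G₂ → ℝ) : G₁ → ℝ := fun γ₁ => ∑' γ₂ : G₂, ν (γ₁, γ₂)

/-- Second marginal of a measure on a product. -/
def marg2 {G₁ G₂ : Type*} (ν : G₁ × G₂ → ℝ) : G₂ → ℝ := fun γ₂ => ∑' γ₁ : G₁, ν (γ₁, γ₂)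

/-- A system of representatives of the right cosets `Λ\Γ` containing the identity,
together with the representative map `rep`, constant on right cosets. -/
structure RepSystem {Γ : Type*} [Group Γ] (Λ : Subgroup Γ) where
  Δ : Finset Γ
  one_mem : (1 : Γ) ∈ Δ
  rep : Γ → Γ
  rep_mem : ∀ γ : Γ, rep γ ∈ Δ
  rep_spec : ∀ γ : Γ, γ * (rep γ)⁻¹ ∈ Λ
  rep_idem : ∀ x ∈ Δ, rep x = x
  rep_coset : ∀ γ : Γ, ∀ v ∈ Λ, rep (v * γ) = rep γ

variable {Γ : Type*} [Group Γ] {Λ : Subgroup Γ} {m : ℕ}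

/-- The cocycle `α(x,s) = ψ(x·s·(x^s)⁻¹) ∈ ℤ^m`. -/
def cocycle (ψ : Λ ≃* Multiplicative (Fin m → ℤ)) (R : RepSystem Λ) (x s : Γ) : Fin m → ℤ :=
  Multiplicative.toAdd (ψ ⟨x * s * (R.rep (x * s))⁻¹, R.rep_spec (x * s)⟩)

/-- The transfer homomorphism `θ(γ) = ∑_{x∈Δ} α(x,γ)`. -/
def transfer (ψ : Λ ≃* Multiplicative (Fin m → ℤ)) (R : RepSystem Λ) (γ : Γ) : Fin m → ℤ :=
  ∑ x ∈ R.Δ, cocycle ψ R x γ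

/-- `Φ(γ) = ψ(v)` where `γ = v·x`, `v ∈ Λ`, `x ∈ Δ`. -/
def Phi (ψ : Λ ≃* Multiplicative (Fin m → ℤ)) (R : RepSystem Λ) (γ : Γ) : Fin m → ℤ :=
  Multiplicative.toAdd (ψ ⟨γ * (R.rep γ)⁻¹, R.rep_spec γ⟩)

/-- A 1-form on the quotient diagram. -/
def IsOneForm (R : RepSystem Λ) (ω : Γ → Γ → ℝ) : Prop :=
  ∀ x ∈ R.Δ, ∀ s : Γ, ω (R.rep (x * s)) s⁻¹ = -ω x s

/-- `χ(ω) = ∑_{x∈Δ} ∑_s c(x,s)·ω(x,s)` where `c(x,s) = μ(s)/#F`. -/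
def chi (R : RepSystem Λ) (μ : Γ → ℝ) (ω : Γ → Γ → ℝ) : ℝ :=
  ∑ x ∈ R.Δ, ∑' s : Γ, μ s / (Λ.index : ℝ) * ω x s

/-- Square-integrability of a 1-form. -/
def SqInt (R : RepSystem Λ) (μ : Γ → ℝ) (ω : Γ → Γ → ℝ) : Prop :=
  ∀ x ∈ R.Δ, Summable (fun s : Γ => μ s / (Λ.index : ℝ) * ω x s ^ 2)

/-- Harmonicity of a (square-integrable) 1-form. -/
def Harmonic (R : RepSystem Λ) (μ : Γ → ℝ) (ω : Γ → Γ → ℝ) : Prop :=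
  SqInt R μ ω ∧ ∀ x ∈ R.Δ, (∑' s : Γ, μ s * ω x s) = chi R μ ω

/-- The differential `df(x,s) = f(x^s) − f(x)`. -/
def dd (R : RepSystem Λ) (f : Γ → ℝ) : Γ → Γ → ℝ := fun x s => f (R.rep (x * s)) - f x

/-- `(u, f)` is a harmonic decomposition of the 1-form `ω`: `ω = u + df` with `u`
a harmonic 1-form. -/
def IsHarmDecomp (R : RepSystem Λ) (μ : Γ → ℝ) (ω u : Γ → Γ → ℝ) (f : Γ → ℝ) : Prop :=
  IsOneForm R u ∧ Harmonic R μ u ∧ ∀ x ∈ R.Δ, ∀ s : Γ, ω x s = u x s + dd R f x s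

/-- The 1-form `v̂(x,s) = ⟨v, α(x,s)⟩` (standard inner product). -/
def vhat (ψ : Λ ≃* Multiplicative (Fin m → ℤ)) (R : RepSystem Λ) (v : Fin m → ℝ) :
    Γ → Γ → ℝ :=
  fun x s => ∑ i, v i * (cocycle ψ R x s i : ℝ)

/-- The 1-form `v̂(x,s) = B(v, α(x,s))` for a bilinear form `B`. -/
def vhatB (ψ : Λ ≃* Multiplicative (Fin m → ℤ)) (R : RepSystem Λ)
    (B : (Fin m → ℝ) →ₗ[ℝ] (Fin m → ℝ) →ₗ[ℝ] ℝ) (v : Fin m → ℝ) : Γ → Γ → ℝ :=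
  fun x s => B v (fun i => (cocycle ψ R x s i : ℝ))

/-- The drift `ζ = (1/#F)·∑_{x∈Δ}∑_s μ(s)·α(x,s) ∈ ℝ^m`. -/
def drift (ψ : Λ ≃* Multiplicative (Fin m → ℤ)) (R : RepSystem Λ) (μ : Γ → ℝ) : Fin m → ℝ :=
  fun i => (Λ.index : ℝ)⁻¹ * ∑ x ∈ R.Δ, ∑' s : Γ, μ s * (cocycle ψ R x s i : ℝ)

/-- The covariance pairing `∑_{x,s} c(x,s)·u(x,s)·u'(x,s) − χ(u)·χ(u')`. -/
def cov (R : RepSystem Λ) (μ : Γ → ℝ) (u u' : Γ → Γ → ℝ) : ℝ :=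
  (∑ x ∈ R.Δ, ∑' s : Γ, μ s / (Λ.index : ℝ) * (u x s * u' x s)) - chi R μ u * chi R μ u'

/-- The transfer operator `ℒ_v` acting on functions `Δ → ℂ`. -/
def transferOp (ψ : Λ ≃* Multiplicative (Fin m → ℤ)) (R : RepSystem Λ) (μ : Γ → ℝ)
    (v : Fin m → ℝ) (f : Γ → ℂ) : Γ → ℂ :=
  fun x => ∑' s : Γ, (μ s : ℂ) *
    Complex.exp (2 * Real.pi * Complex.I * ((∑ i, v i * (cocycle ψ R x s i : ℝ)) : ℝ)) *
    f (R.rep (x * s))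

/-- The Gaussian density `ξ_A(w)` associated with a (positive-definite) matrix `A`. -/
def gauss {d : ℕ} (A : Matrix (Fin d) (Fin d) ℝ) (w : Fin d → ℝ) : ℝ :=
  (2 * Real.pi) ^ (-(d : ℝ) / 2) * A.det ^ (-(1 : ℝ) / 2) *
    Real.exp (-(w ⬝ᵥ A⁻¹.mulVec w) / 2)

/-- The product representative system for `Λ₁ × Λ₂ ≤ Γ₁ × Γ₂`. -/
def prodRep {Γ₁ : Type*} [Group Γ₁] {Γ₂ : Type*} [Group Γ₂]
    {Λ₁ : Subgroup Γ₁} {Λ₂ : Subgroup Γ₂}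
    (R₁ : RepSystem Λ₁) (R₂ : RepSystem Λ₂) : RepSystem (Λ₁.prod Λ₂) where
  Δ := R₁.Δ ×ˢ R₂.Δ
  one_mem := Finset.mem_product.mpr ⟨R₁.one_mem, R₂.one_mem⟩
  rep := fun p => (R₁.rep p.1, R₂.rep p.2)
  rep_mem := fun p => Finset.mem_product.mpr ⟨R₁.rep_mem p.1, R₂.rep_mem p.2⟩
  rep_spec := fun p => Subgroup.mem_prod.mpr ⟨R₁.rep_spec p.1, R₂.rep_spec p.2⟩
  rep_idem := fun x hx => by
    rcases Finset.mem_product.mp hx with ⟨h1, h2⟩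
    exact Prod.ext_iff.mpr ⟨R₁.rep_idem x.1 h1, R₂.rep_idem x.2 h2⟩
  rep_coset := fun p v hv => by
    rcases Subgroup.mem_prod.mp hv with ⟨h1, h2⟩
    exact Prod.ext_iff.mpr ⟨R₁.rep_coset p.1 v.1 h1, R₂.rep_coset p.2 v.2 h2⟩

/-- The 1-form `𝐯̂(x,s) = ⟨𝐯, α(x,s)⟩` on a product, standard inner product. -/
def vhat2 {Γ₁ : Type*} [Group Γ₁] {Γ₂ : Type*} [Group Γ₂]
    {Λ₁ : Subgroup Γ₁} {Λ₂ : Subgroup Γ₂} {m₁ m₂ : ℕ}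
    (ψ₁ : Λ₁ ≃* Multiplicative (Fin m₁ → ℤ)) (R₁ : RepSystem Λ₁)
    (ψ₂ : Λ₂ ≃* Multiplicative (Fin m₂ → ℤ)) (R₂ : RepSystem Λ₂)
    (v : (Fin m₁ → ℝ) × (Fin m₂ → ℝ)) : (Γ₁ × Γ₂) → (Γ₁ × Γ₂) → ℝ :=
  fun x s => (∑ i, v.1 i * (cocycle ψ₁ R₁ x.1 s.1 i : ℝ)) +
    ∑ i, v.2 i * (cocycle ψ₂ R₂ x.2 s.2 i : ℝ)

/-- The 1-form `𝐯̂(x,s) = ⟨𝐯, α(x,s)⟩` on a product, orthogonal-sum of the two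
bilinear forms `B₁`, `B₂`. -/
def vhatB2 {Γ₁ : Type*} [Group Γ₁] {Γ₂ : Type*} [Group Γ₂]
    {Λ₁ : Subgroup Γ₁} {Λ₂ : Subgroup Γ₂} {m₁ m₂ : ℕ}
    (ψ₁ : Λ₁ ≃* Multiplicative (Fin m₁ → ℤ)) (R₁ : RepSystem Λ₁)
    (B₁ : (Fin m₁ → ℝ) →ₗ[ℝ] (Fin m₁ → ℝ) →ₗ[ℝ] ℝ)
    (ψ₂ : Λ₂ ≃* Multiplicative (Fin m₂ → ℤ)) (R₂ : RepSystem Λ₂)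
    (B₂ : (Fin m₂ → ℝ) →ₗ[ℝ] (Fin m₂ → ℝ) →ₗ[ℝ] ℝ)
    (v : (Fin m₁ → ℝ) × (Fin m₂ → ℝ)) : (Γ₁ × Γ₂) → (Γ₁ × Γ₂) → ℝ :=
  fun x s => B₁ v.1 (fun i => (cocycle ψ₁ R₁ x.1 s.1 i : ℝ)) +
    B₂ v.2 (fun i => (cocycle ψ₂ R₂ x.2 s.2 i : ℝ))

end

/-!
The *defect* `d(χ) = 1 − |μ̂(χ)|²` of a unitary character `χ` of `Γ` governs both walks: the
characteristic functions of `π^ρ_n` and `μ_n × μ_n` at `(γ, γ') ↦ χ(γ) χ(γ')⁻¹` are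
`(1 − ρ d(χ))ⁿ` and `(1 − d(χ))ⁿ`. Take many characters `χᵢ` for which `n d(χᵢ/χⱼ)`, `i ≠ j`, is
large but bounded independently of `n`. Under `μ_n × μ_n` they are almost orthogonal, whereas for
small `ρ` their average is almost unimodular under `π^ρ_n`, so the squared modulus of this average
separates the two measures.

A nonconstant real homomorphism `φ` yields the continuous path of characters `u ↦ exp(iuφ)`, along
which `d` takes all small values. As `d(χψ) ≤ 2 d(χ) + 2 d(ψ)`, characters chosen at the levels
`d(χᵢ) = 4ⁱ τ` with `τ` of order `1/n` have all their ratios at level comparable to `τ`.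
-/

section IsProb

variable {G H : Type*}

theorem IsProb.summable_smul {p : G → ℝ} (hp : IsProb p) {E : Type*} [NormedAddCommGroup E]
    [NormedSpace ℝ E] [CompleteSpace E] {f : G → E} {C : ℝ} (hf : ∀ g, ‖f g‖ ≤ C) :
    Summable fun g => p g • f g :=
  .of_norm_bounded (hp.2.summable.mul_right C) fun g => by
    rw [norm_smul, Real.norm_of_nonneg (hp.1 g)]
    exact mul_le_mul_of_nonneg_left (hf g) (hp.1 g)

protected theorem IsProb.prod {p : G → ℝ} {q : H → ℝ} (hp : IsProb p) (hq : IsProb q) :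
    IsProb fun z : G × H => p z.1 * q z.2 :=
  ⟨fun z => mul_nonneg (hp.1 z.1) (hq.1 z.2), by
    simpa using hp.2.mul hq.2 (hp.2.summable.mul_of_nonneg hq.2.summable hp.1 hq.1)⟩

theorem hasSum_ite_fst_eq_snd {E : Type*} [AddCommMonoid E] [TopologicalSpace E] {f : G × G → E}
    {a : E} (h : HasSum (fun g => f (g, g)) a) :
    HasSum (fun z : G × G => if z.1 = z.2 then f z else 0) a := by
  have hinj : Function.Injective fun g : G => (g, g) := fun _ _ hab => (Prod.ext_iff.mp hab).1
  rw [← hinj.hasSum_iff]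
  · simpa [Function.comp_def] using h
  · rintro ⟨g, g'⟩ hz
    exact if_neg fun hg : g = g' => hz ⟨g, by rw [hg]⟩

theorem hasSum_noised_smul {E : Type*} [AddCommGroup E] [Module ℝ E] [TopologicalSpace E]
    [ContinuousAdd E] [ContinuousConstSMul ℝ E] {μ : G → ℝ} {f : G × G → E} {a b : E} (ρ : ℝ)
    (ha : HasSum (fun z : G × G => (μ z.1 * μ z.2) • f z) a)
    (hb : HasSum (fun g => μ g • f (g, g)) b) :
    HasSum (fun z => noised μ ρ z • f z) (ρ • a + (1 - ρ) • b) := by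
  have hdiag := hasSum_ite_fst_eq_snd (f := fun z : G × G => μ z.1 • f z) hb
  refine ((ha.const_smul ρ).add (hdiag.const_smul (1 - ρ))).congr_fun fun z => ?_
  simp only [noised]
  split_ifs <;> module

protected theorem IsProb.noised {μ : G → ℝ} (hμ : IsProb μ) {ρ : ℝ} (hρ₀ : 0 ≤ ρ) (hρ₁ : ρ ≤ 1) :
    IsProb (noised μ ρ) := by
  refine ⟨fun z => ?_, ?_⟩
  · have := hμ.1 z.1
    have := hμ.1 z.2
    have := sub_nonneg.mpr hρ₁
    simp only [noised]
    positivity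
  · simpa using hasSum_noised_smul (f := fun _ => (1 : ℝ)) (a := 1) (b := 1) ρ
      (by simpa using (hμ.prod hμ).2) (by simpa using hμ.2)

theorem noised_one (μ : G → ℝ) : noised μ 1 = fun z : G × G => μ z.1 * μ z.2 := by
  funext z
  simp [noised]

end IsProb

section Convolution

variable {G H : Type*} [Group G] [Group H]

theorem IsProb.summable_conv {p q : G → ℝ} (hp : IsProb p) (hq : IsProb q) (g : G) :
    Summable fun h => p h * q (h⁻¹ * g) :=
  hp.summable_smul (C := 1) fun h => by
    rw [Real.norm_of_nonneg (hq.1 _)]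
    exact le_hasSum hq.2 _ fun g _ => hq.1 g

theorem IsProb.hasSum_conv_smul {p q : G → ℝ} (hp : IsProb p) (hq : IsProb q) {E : Type*}
    [NormedAddCommGroup E] [NormedSpace ℝ E] {f : G → E} {a : E}
    (ha : HasSum (fun z : G × G => (p z.1 * q z.2) • f (z.1 * z.2)) a) :
    HasSum (fun g => conv p q g • f g) a := by
  let e : G × G ≃ G × G :=
    { toFun := fun z => (z.2, z.2⁻¹ * z.1)
      invFun := fun z => (z.1 * z.2, z.1)
      left_inv := fun z => by simp
      right_inv := fun z => by simp }
  have hswap : HasSum (fun z : G × G => (p z.2 * q (z.2⁻¹ * z.1)) • f z.1) a := by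
    simpa [e, Function.comp_def] using e.hasSum_iff.mpr ha
  exact hswap.prod_fiberwise fun g => (hp.summable_conv hq g).hasSum.smul_const (f g)

protected theorem IsProb.conv {p q : G → ℝ} (hp : IsProb p) (hq : IsProb q) : IsProb (conv p q) :=
  ⟨fun _ => tsum_nonneg fun _ => mul_nonneg (hp.1 _) (hq.1 _), by
    simpa using hp.hasSum_conv_smul hq (f := fun _ => (1 : ℝ)) (a := 1)
      (by simpa using (hp.prod hq).2)⟩

protected theorem IsProb.convPow {p : G → ℝ} (hp : IsProb p) (n : ℕ) : IsProb (convPow p n) := by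
  induction n with
  | zero => exact ⟨fun g => by simp only [convPow]; positivity, hasSum_ite_eq 1 1⟩
  | succ n ih => exact ih.conv hp

theorem convPow_prod {p : G → ℝ} {q : H → ℝ} (hp : IsProb p) (hq : IsProb q) (n : ℕ) :
    convPow (fun z : G × H => p z.1 * q z.2) n = fun z => convPow p n z.1 * convPow q n z.2 := by
  induction n with
  | zero =>
    funext z
    simp only [convPow, Prod.ext_iff, Prod.fst_one, Prod.snd_one, ite_and, mul_ite, mul_one,
      mul_zero]
    split_ifs <;> rfl
  | succ n ih =>
    funext z
    simp only [convPow, ih, conv]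
    rw [tsum_mul_tsum_of_summable_norm ((hp.convPow n).summable_conv hp z.1).norm
      ((hq.convPow n).summable_conv hq z.2).norm]
    exact tsum_congr fun _ => mul_mul_mul_comm _ _ _ _

end Convolution

section Fourier

variable {G H : Type*} [Group G] [Group H] {p q μ : G → ℝ}

/-- The Fourier transform `p̂(χ) = ∑_g p(g) χ(g)` of a function `p` on `G` at a unitary
character `χ`. -/
noncomputable def fourier (p : G → ℝ) (χ : G →* Circle) : ℂ := ∑' g, p g • (χ g : ℂ)

theorem IsProb.hasSum_fourier (hp : IsProb p) (χ : G →* Circle) :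
    HasSum (fun g => p g • (χ g : ℂ)) (fourier p χ) :=
  (hp.summable_smul fun g => (χ g).norm_coe.le).hasSum

theorem IsProb.fourier_one (hp : IsProb p) : fourier p 1 = 1 :=
  (hp.hasSum_fourier 1).unique <| by simpa using Complex.hasSum_ofReal.mpr hp.2

theorem fourier_inv (p : G → ℝ) (χ : G →* Circle) :
    fourier p χ⁻¹ = starRingEnd ℂ (fourier p χ) := by
  rw [fourier, fourier, Complex.conj_tsum]
  exact tsum_congr fun g => by
    simp only [MonoidHom.inv_apply, Circle.coe_inv_eq_conj, Complex.real_smul, map_mul,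
      Complex.conj_ofReal]

theorem IsProb.norm_fourier_le_one (hp : IsProb p) (χ : G →* Circle) : ‖fourier p χ‖ ≤ 1 := by
  refine tsum_of_norm_bounded hp.2 fun g => ?_
  rw [norm_smul, Circle.norm_coe, mul_one, Real.norm_of_nonneg (hp.1 g)]

theorem IsProb.fourier_prod (hp : IsProb p) {q : H → ℝ} (hq : IsProb q) (χ : G →* Circle)
    (ψ : H →* Circle) :
    fourier (fun z : G × H => p z.1 * q z.2) (χ.coprod ψ) = fourier p χ * fourier q ψ := by
  have hpt (z : G × H) : (p z.1 * q z.2) • (χ.coprod ψ z : ℂ) =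
      p z.1 • (χ z.1 : ℂ) * q z.2 • (ψ z.2 : ℂ) := by
    simp only [MonoidHom.coprod_apply, Circle.coe_mul, smul_mul_smul_comm]
  have hsum := (hp.prod hq).hasSum_fourier (χ.coprod ψ)
  refine hsum.unique (((hp.hasSum_fourier χ).mul (hq.hasSum_fourier ψ) ?_).congr_fun hpt)
  exact hsum.summable.congr fun z => hpt z

theorem IsProb.fourier_conv (hp : IsProb p) (hq : IsProb q) (χ : G →* Circle) :
    fourier (conv p q) χ = fourier p χ * fourier q χ := by
  rw [← hp.fourier_prod hq]
  refine ((hp.conv hq).hasSum_fourier χ).unique (hp.hasSum_conv_smul hq ?_)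
  simpa using (hp.prod hq).hasSum_fourier (χ.coprod χ)

theorem IsProb.fourier_convPow (hp : IsProb p) (χ : G →* Circle) (n : ℕ) :
    fourier (convPow p n) χ = fourier p χ ^ n := by
  induction n with
  | zero => simp [fourier, convPow]
  | succ n ih => rw [pow_succ, ← ih, ← (hp.convPow n).fourier_conv hp]; rfl

/-- The character `(γ, γ') ↦ χ(γ) χ(γ')⁻¹` of `G × G`. It is trivial on the diagonal, so that it
only sees the part of `π^ρ` where the two coordinates are independent. -/
noncomputable def diffChar (χ : G →* Circle) : G × G →* Circle := χ.coprod χ⁻¹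

theorem diffChar_apply (χ : G →* Circle) (z : G × G) : diffChar χ z = χ z.1 / χ z.2 := by
  simp [diffChar, div_eq_mul_inv]

theorem diffChar_div (χ ψ : G →* Circle) : diffChar (χ / ψ) = diffChar χ / diffChar ψ := by
  ext z
  simp only [diffChar_apply, MonoidHom.div_apply, div_div_div_comm]

/-- The defect `d(χ) = 1 − |μ̂(χ)|²`, which measures how far `χ` is from being constant on the
support of `μ`. -/
noncomputable def charDefect (μ : G → ℝ) (χ : G →* Circle) : ℝ := 1 - ‖fourier μ χ‖ ^ 2

theorem IsProb.fourier_prod_diffChar (hμ : IsProb μ) (χ : G →* Circle) :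
    fourier (fun z : G × G => μ z.1 * μ z.2) (diffChar χ) = ((1 - charDefect μ χ : ℝ) : ℂ) := by
  rw [diffChar, hμ.fourier_prod hμ, fourier_inv, Complex.mul_conj']
  simp [charDefect]

theorem IsProb.fourier_noised (hμ : IsProb μ) {ρ : ℝ} (hρ₀ : 0 ≤ ρ) (hρ₁ : ρ ≤ 1)
    (χ : G →* Circle) :
    fourier (noised μ ρ) (diffChar χ) = ((1 - ρ * charDefect μ χ : ℝ) : ℂ) := by
  have hprod := (hμ.prod hμ).hasSum_fourier (diffChar χ)
  rw [hμ.fourier_prod_diffChar] at hprod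
  have hdiag : HasSum (fun g => μ g • (diffChar χ (g, g) : ℂ)) 1 := by
    simpa [diffChar_apply] using Complex.hasSum_ofReal.mpr hμ.2
  rw [((hμ.noised hρ₀ hρ₁).hasSum_fourier _).unique (hasSum_noised_smul ρ hprod hdiag)]
  simp only [Complex.real_smul]
  push_cast
  ring

end Fourier

section CharDefect

variable {G : Type*} [Group G] {μ : G → ℝ}

theorem charDefect_le_one (μ : G → ℝ) (χ : G →* Circle) : charDefect μ χ ≤ 1 :=
  sub_le_self 1 (sq_nonneg _)

theorem IsProb.charDefect_nonneg (hμ : IsProb μ) (χ : G →* Circle) : 0 ≤ charDefect μ χ :=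
  sub_nonneg.mpr (pow_le_one₀ (norm_nonneg _) (hμ.norm_fourier_le_one χ))

theorem IsProb.charDefect_one (hμ : IsProb μ) : charDefect μ 1 = 0 := by
  simp [charDefect, hμ.fourier_one]

theorem charDefect_inv (μ : G → ℝ) (χ : G →* Circle) : charDefect μ χ⁻¹ = charDefect μ χ := by
  simp [charDefect, fourier_inv]

theorem IsProb.hasSum_charDefect (hμ : IsProb μ) (χ : G →* Circle) :
    HasSum (fun z : G × G => μ z.1 * μ z.2 * (1 - (diffChar χ z : ℂ).re)) (charDefect μ χ) := by
  have hre := Complex.hasSum_re ((hμ.prod hμ).hasSum_fourier (diffChar χ))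
  rw [hμ.fourier_prod_diffChar, Complex.ofReal_re] at hre
  simpa [mul_sub] using (hμ.prod hμ).2.sub hre

theorem circle_re_le_one (z : Circle) : (z : ℂ).re ≤ 1 :=
  (Complex.re_le_norm _).trans_eq z.norm_coe

theorem one_sub_re_circle_mul_le (z w : Circle) :
    1 - ((z * w : Circle) : ℂ).re ≤ 2 * (1 - (z : ℂ).re) + 2 * (1 - (w : ℂ).re) := by
  have hz := z.normSq_coe
  have hw := w.normSq_coe
  rw [Complex.normSq_apply] at hz hw
  rw [Circle.coe_mul, Complex.mul_re]
  nlinarith [sq_nonneg ((z : ℂ).re + (w : ℂ).re - 2), sq_nonneg ((z : ℂ).im - (w : ℂ).im)]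

theorem IsProb.charDefect_mul_le (hμ : IsProb μ) (χ ψ : G →* Circle) :
    charDefect μ (χ * ψ) ≤ 2 * charDefect μ χ + 2 * charDefect μ ψ := by
  refine hasSum_le (fun z => ?_) (hμ.hasSum_charDefect (χ * ψ))
    (((hμ.hasSum_charDefect χ).mul_left 2).add ((hμ.hasSum_charDefect ψ).mul_left 2))
  have hchar : diffChar (χ * ψ) z = diffChar χ z * diffChar ψ z := by
    simp only [diffChar_apply, MonoidHom.mul_apply, mul_div_mul_comm]
  have hle := mul_le_mul_of_nonneg_left
    (one_sub_re_circle_mul_le (diffChar χ z) (diffChar ψ z)) ((hμ.prod hμ).1 z)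
  rw [hchar]
  linarith

theorem IsProb.charDefect_div_le (hμ : IsProb μ) (χ ψ : G →* Circle) :
    charDefect μ (χ / ψ) ≤ 2 * charDefect μ χ + 2 * charDefect μ ψ := by
  simpa [div_eq_mul_inv, charDefect_inv] using hμ.charDefect_mul_le χ ψ⁻¹

theorem IsProb.charDefect_pos (hμ : IsProb μ) {χ : G →* Circle} {x y : G} (hx : 0 < μ x)
    (hy : 0 < μ y) (hχ : (χ x / χ y : ℂ).re < 1) : 0 < charDefect μ χ := by
  have hterm := le_hasSum (hμ.hasSum_charDefect χ) (x, y) fun z _ =>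
    mul_nonneg ((hμ.prod hμ).1 z) (sub_nonneg.mpr (circle_re_le_one _))
  refine lt_of_lt_of_le (mul_pos (mul_pos hx hy) (sub_pos.mpr ?_)) hterm
  simpa [diffChar_apply] using hχ

end CharDefect

section SeparatedCharacters

variable {G : Type*} [Group G] {μ : G → ℝ}

/-- The character `g ↦ exp(i u φ(g))` attached to a real-valued homomorphism `φ`. -/
noncomputable def expChar (φ : G →* Multiplicative ℝ) (u : ℝ) : G →* Circle where
  toFun g := Circle.exp (u * (φ g).toAdd)
  map_one' := by simp
  map_mul' g h := by rw [map_mul φ, toAdd_mul, mul_add, Circle.exp_add]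

theorem expChar_apply (φ : G →* Multiplicative ℝ) (u : ℝ) (g : G) :
    expChar φ u g = Circle.exp (u * (φ g).toAdd) := rfl

theorem expChar_zero (φ : G →* Multiplicative ℝ) : expChar φ 0 = 1 := by
  ext g
  simp [expChar_apply]

theorem IsProb.continuous_charDefect_expChar (hμ : IsProb μ) (φ : G →* Multiplicative ℝ) :
    Continuous fun u => charDefect μ (expChar φ u) := by
  have hfourier : Continuous fun u => fourier μ (expChar φ u) := by
    refine continuous_tsum (fun g => ?_) hμ.2.summable fun g u => ?_
    · simp only [expChar_apply]
      fun_prop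
    · rw [norm_smul, Circle.norm_coe, mul_one, Real.norm_of_nonneg (hμ.1 g)]
  exact continuous_const.sub (hfourier.norm.pow 2)

theorem IsProb.exists_charDefect_expChar_pos (hμ : IsProb μ) (φ : G →* Multiplicative ℝ) {x y : G}
    (hx : 0 < μ x) (hy : 0 < μ y) (hxy : φ x ≠ φ y) : ∃ u, 0 < charDefect μ (expChar φ u) := by
  have hne : (φ x).toAdd - (φ y).toAdd ≠ 0 :=
    sub_ne_zero.mpr (Multiplicative.toAdd.injective.ne hxy)
  refine ⟨Real.pi / ((φ x).toAdd - (φ y).toAdd), hμ.charDefect_pos hx hy ?_⟩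
  rw [← Circle.coe_div, expChar_apply, expChar_apply, ← Circle.exp_sub, ← mul_sub,
    div_mul_cancel₀ _ hne, Circle.coe_exp, Complex.exp_pi_mul_I]
  norm_num

theorem IsProb.le_charDefect_div_of_four_mul_le (hμ : IsProb μ) {χ ψ : G →* Circle}
    (h : 4 * charDefect μ ψ ≤ charDefect μ χ) : charDefect μ ψ ≤ charDefect μ (χ / ψ) := by
  have hmul := hμ.charDefect_mul_le (χ / ψ) ψ
  rw [div_mul_cancel] at hmul
  linarith

theorem IsProb.charDefect_div_mem_Icc (hμ : IsProb μ) {χ : ℕ → G →* Circle} {τ : ℝ} (hτ : 0 ≤ τ)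
    {K : ℕ} (hχ : ∀ i < K, charDefect μ (χ i) = 4 ^ i * τ) {i j : ℕ} (hij : i < j) (hj : j < K) :
    charDefect μ (χ j / χ i) ∈ Set.Icc τ (4 ^ K * τ) := by
  have hi := hχ i (hij.trans hj)
  have hpow {k l : ℕ} (hkl : k ≤ l) : (4 : ℝ) ^ k * τ ≤ 4 ^ l * τ := by gcongr; norm_num
  constructor
  · calc τ = 4 ^ 0 * τ := by ring
      _ ≤ charDefect μ (χ i) := (hpow i.zero_le).trans_eq hi.symm
      _ ≤ charDefect μ (χ j / χ i) := hμ.le_charDefect_div_of_four_mul_le <| by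
        rw [hi, hχ j hj, ← mul_assoc, ← pow_succ']
        exact hpow hij
  · calc charDefect μ (χ j / χ i) ≤ 2 * (4 ^ j * τ) + 2 * (4 ^ i * τ) := by
          simpa only [hi, hχ j hj] using hμ.charDefect_div_le (χ j) (χ i)
      _ ≤ 4 * (4 ^ j * τ) := by linarith [hpow hij.le]
      _ = 4 ^ (j + 1) * τ := by ring
      _ ≤ 4 ^ K * τ := hpow hj

theorem IsProb.eventually_exists_separated_characters (hμ : IsProb μ) (φ : G →* Multiplicative ℝ)
    {x y : G} (hx : 0 < μ x) (hy : 0 < μ y) (hxy : φ x ≠ φ y) (K : ℕ) :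
    ∀ᶠ τ in nhdsWithin (0 : ℝ) (Set.Ioi 0), ∃ χ : Fin K → G →* Circle,
      ∀ i j, i ≠ j → charDefect μ (χ i / χ j) ∈ Set.Icc τ (4 ^ K * τ) := by
  obtain ⟨v, hv⟩ := hμ.exists_charDefect_expChar_pos φ hx hy hxy
  filter_upwards [Ioc_mem_nhdsGT (div_pos hv (pow_pos four_pos K))] with τ ⟨hτ₀, hτ⟩
  have hlevel (i : ℕ) (hi : i < K) : ∃ u, charDefect μ (expChar φ u) = 4 ^ i * τ := by
    refine intermediate_value_univ 0 v (hμ.continuous_charDefect_expChar φ) ⟨?_, ?_⟩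
    · rw [expChar_zero, hμ.charDefect_one]
      positivity
    · calc (4 : ℝ) ^ i * τ ≤ 4 ^ K * τ := by gcongr; norm_num
        _ ≤ charDefect μ (expChar φ v) := (le_div_iff₀' (by positivity)).mp hτ
  choose! u hu using hlevel
  refine ⟨fun i => expChar φ (u i), fun i j hij => ?_⟩
  rcases lt_or_gt_of_ne hij with h | h
  · rw [← charDefect_inv, inv_div]
    exact hμ.charDefect_div_mem_Icc hτ₀.le hu h j.isLt
  · exact hμ.charDefect_div_mem_Icc hτ₀.le hu h i.isLt

end SeparatedCharacters

section TotalVariation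

variable {Z : Type*} {p q : Z → ℝ}

theorem tv_le_one (hp : IsProb p) (hq : IsProb q) : tv p q ≤ 1 := by
  have hle (z : Z) : |p z - q z| ≤ p z + q z := by
    simpa [abs_of_nonneg (hp.1 z), abs_of_nonneg (hq.1 z)] using abs_sub (p z) (q z)
  have htsum := hasSum_le hle (hp.2.sub hq.2).summable.abs.hasSum (hp.2.add hq.2)
  rw [tv]
  linarith

theorem sub_le_tv_of_hasSum (hp : IsProb p) (hq : IsProb q) {f : Z → ℝ}
    (hf : ∀ z, f z ∈ Set.Icc 0 1) {a b : ℝ} (ha : HasSum (fun z => p z * f z) a)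
    (hb : HasSum (fun z => q z * f z) b) : a - b ≤ tv p q := by
  -- Centring `f` at `1/2` costs nothing, as `p` and `q` have the same mass, and gains the factor
  -- `1/2` of `tv`.
  have hcentred := (ha.sub hb).sub ((hp.2.sub hq.2).mul_left (1 / 2))
  rw [sub_self, mul_zero, sub_zero] at hcentred
  refine hasSum_le (fun z => ?_) hcentred ((hp.2.sub hq.2).summable.abs.hasSum.mul_left (1 / 2))
  have hhalf : |f z - 1 / 2| ≤ 1 / 2 := abs_le.mpr ⟨by linarith [(hf z).1], by linarith [(hf z).2]⟩
  calc p z * f z - q z * f z - 1 / 2 * (p z - q z) = (p z - q z) * (f z - 1 / 2) := by ring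
    _ ≤ |p z - q z| * |f z - 1 / 2| := (le_abs_self _).trans_eq (abs_mul _ _)
    _ ≤ |p z - q z| * (1 / 2) := by gcongr
    _ = 1 / 2 * |p z - q z| := mul_comm _ _

end TotalVariation

section CharacterAverage

open Finset

variable {G ι : Type*} [Group G] [Fintype ι]

theorem hasSum_expect {κ α M : Type*} [AddCommMonoid M] [Module ℚ≥0 M] [TopologicalSpace M]
    [ContinuousAdd M] [ContinuousConstSMul ℚ≥0 M] {s : Finset κ} {f : κ → α → M} {a : κ → M}
    (h : ∀ i ∈ s, HasSum (f i) (a i)) : HasSum (fun x => 𝔼 i ∈ s, f i x) (𝔼 i ∈ s, a i) :=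
  (hasSum_sum h).const_smul _

theorem norm_sq_expect_circle (c : ι → Circle) :
    (‖𝔼 i, (c i : ℂ)‖ ^ 2 : ℂ) = 𝔼 i, 𝔼 j, ((c i / c j : Circle) : ℂ) := by
  rw [← Complex.mul_conj', map_expect, Fintype.expect_mul_expect]
  simp only [div_eq_mul_inv, Circle.coe_mul, Circle.coe_inv_eq_conj]

theorem norm_sq_expect_circle_mem_Icc [Nonempty ι] (c : ι → Circle) :
    ‖𝔼 i, (c i : ℂ)‖ ^ 2 ∈ Set.Icc (0 : ℝ) 1 := by
  have hle : ‖𝔼 i, (c i : ℂ)‖ ≤ 1 := (RCLike.norm_expect_le (K := ℂ)).trans_eq <| by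
    simp only [Circle.norm_coe, Fintype.expect_const]
  exact ⟨sq_nonneg _, pow_le_one₀ (norm_nonneg _) hle⟩

theorem IsProb.hasSum_norm_sq_expect {p : G → ℝ} (hp : IsProb p) (χ : ι → G →* Circle) :
    HasSum (fun g => p g • (‖𝔼 i, (χ i g : ℂ)‖ ^ 2 : ℂ)) (𝔼 i, 𝔼 j, fourier p (χ i / χ j)) := by
  simp only [norm_sq_expect_circle, smul_expect, ← MonoidHom.div_apply]
  exact hasSum_expect fun i _ => hasSum_expect fun j _ => hp.hasSum_fourier (χ i / χ j)

end CharacterAverage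

section NoiseTV

open Finset

variable {G ι : Type*} [Group G] [Fintype ι] {μ : G → ℝ} {ρ : ℝ}

/-- The distance `‖π^ρ_n − μ_n × μ_n‖_TV`, whose behaviour as `n → ∞` decides whether the
`μ`-random walk is noise sensitive. -/
noncomputable def noiseTV (μ : G → ℝ) (ρ : ℝ) (n : ℕ) : ℝ :=
  tv (convPow (noised μ ρ) n) (fun p : G × G => convPow μ n p.1 * convPow μ n p.2)

theorem IsProb.noiseTV_le_one (hμ : IsProb μ) (hρ₀ : 0 ≤ ρ) (hρ₁ : ρ ≤ 1) (n : ℕ) :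
    noiseTV μ ρ n ≤ 1 :=
  tv_le_one ((hμ.noised hρ₀ hρ₁).convPow n) ((hμ.convPow n).prod (hμ.convPow n))

theorem IsProb.convPow_noised_one (hμ : IsProb μ) (n : ℕ) :
    convPow (noised μ 1) n = fun p : G × G => convPow μ n p.1 * convPow μ n p.2 := by
  rw [noised_one, convPow_prod hμ hμ]

theorem IsProb.hasSum_convPow_noised_mul_norm_sq (hμ : IsProb μ) (hρ₀ : 0 ≤ ρ) (hρ₁ : ρ ≤ 1)
    (χ : ι → G →* Circle) (n : ℕ) :
    HasSum (fun z => convPow (noised μ ρ) n z * ‖𝔼 i, (diffChar (χ i) z : ℂ)‖ ^ 2)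
      (𝔼 i, 𝔼 j, (1 - ρ * charDefect μ (χ i / χ j)) ^ n) := by
  have hsum := ((hμ.noised hρ₀ hρ₁).convPow n).hasSum_norm_sq_expect fun i => diffChar (χ i)
  simp only [← diffChar_div, (hμ.noised hρ₀ hρ₁).fourier_convPow, hμ.fourier_noised hρ₀ hρ₁,
    Complex.real_smul] at hsum
  exact_mod_cast hsum

theorem IsProb.expect_sub_expect_le_noiseTV [Nonempty ι] (hμ : IsProb μ) (hρ₀ : 0 ≤ ρ)
    (hρ₁ : ρ ≤ 1) (χ : ι → G →* Circle) (n : ℕ) :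
    𝔼 i, 𝔼 j, (1 - ρ * charDefect μ (χ i / χ j)) ^ n -
      𝔼 i, 𝔼 j, (1 - charDefect μ (χ i / χ j)) ^ n ≤ noiseTV μ ρ n := by
  have hprod := hμ.hasSum_convPow_noised_mul_norm_sq zero_le_one le_rfl χ n
  simp only [hμ.convPow_noised_one, one_mul] at hprod
  exact sub_le_tv_of_hasSum ((hμ.noised hρ₀ hρ₁).convPow n) ((hμ.convPow n).prod (hμ.convPow n))
    (fun z => norm_sq_expect_circle_mem_Icc fun i => diffChar (χ i) z)
    (hμ.hasSum_convPow_noised_mul_norm_sq hρ₀ hρ₁ χ n) hprod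

theorem expect_expect_one_sub_pow_le {d : ι → ι → ℝ} {m : ℝ} (hdiag : ∀ i, d i i = 0)
    (hoff : ∀ i j, i ≠ j → m ≤ d i j) (hle : ∀ i j, d i j ≤ 1) (n : ℕ) :
    𝔼 i, 𝔼 j, (1 - d i j) ^ n ≤ 1 / Fintype.card ι + Real.exp (-(n * m)) := by
  have hterm (i j : ι) :
      (1 - d i j) ^ n ≤ (if i = j then 1 else 0) + Real.exp (-(n * m)) := by
    split_ifs with hij
    · simpa [← hij, hdiag] using Real.exp_nonneg _
    · calc (1 - d i j) ^ n ≤ Real.exp (-m) ^ n := by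
            gcongr
            · exact sub_nonneg.mpr (hle i j)
            · linarith [hoff i j hij, Real.one_sub_le_exp_neg m]
        _ = 0 + Real.exp (-(n * m)) := by rw [← Real.exp_nat_mul, mul_neg, zero_add]
  cases isEmpty_or_nonempty ι
  · simpa using Real.exp_nonneg _
  calc 𝔼 i, 𝔼 j, (1 - d i j) ^ n
      ≤ 𝔼 i : ι, 𝔼 j : ι, ((if i = j then 1 else 0) + Real.exp (-(n * m))) :=
        expect_le_expect fun i _ => expect_le_expect fun j _ => hterm i j
    _ = 1 / Fintype.card ι + Real.exp (-(n * m)) := by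
        simp [expect_add_distrib]

theorem IsProb.le_noiseTV_of_charDefect_div_mem_Icc [Nonempty ι] (hμ : IsProb μ) (hρ₀ : 0 ≤ ρ)
    (hρ₁ : ρ ≤ 1) {χ : ι → G →* Circle} {m M : ℝ} (hM : 0 ≤ M)
    (hχ : ∀ i j, i ≠ j → charDefect μ (χ i / χ j) ∈ Set.Icc m M) (n : ℕ) :
    1 - ρ * (n * M) - (1 / Fintype.card ι + Real.exp (-(n * m))) ≤ noiseTV μ ρ n := by
  have hdiag (i : ι) : charDefect μ (χ i / χ i) = 0 := by rw [div_self', hμ.charDefect_one]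
  have hbound (i j : ι) : charDefect μ (χ i / χ j) ≤ M := by
    rcases eq_or_ne i j with rfl | hij
    · rwa [hdiag]
    · exact (hχ i j hij).2
  have hnoised : 1 - ρ * (n * M) ≤ 𝔼 i, 𝔼 j, (1 - ρ * charDefect μ (χ i / χ j)) ^ n := by
    refine le_expect univ_nonempty fun i _ => le_expect univ_nonempty fun j _ => ?_
    have hρd := mul_le_one₀ hρ₁ (hμ.charDefect_nonneg (χ i / χ j)) (charDefect_le_one μ _)
    calc 1 - ρ * (n * M) = 1 - n * (ρ * M) := by ring
      _ ≤ 1 - n * (ρ * charDefect μ (χ i / χ j)) := by gcongr; exact hbound i j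
      _ = 1 + n * -(ρ * charDefect μ (χ i / χ j)) := by ring
      _ ≤ (1 + -(ρ * charDefect μ (χ i / χ j))) ^ n := one_add_mul_le_pow (by linarith) n
      _ = (1 - ρ * charDefect μ (χ i / χ j)) ^ n := by rw [← sub_eq_add_neg]
  have hprod := expect_expect_one_sub_pow_le hdiag (fun i j hij => (hχ i j hij).1)
    (fun i j => charDefect_le_one μ _) n
  linarith [hμ.expect_sub_expect_le_noiseTV hρ₀ hρ₁ χ n]

theorem IsProb.eventually_le_noiseTV (hμ : IsProb μ) (φ : G →* Multiplicative ℝ) {x y : G}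
    (hx : 0 < μ x) (hy : 0 < μ y) (hxy : φ x ≠ φ y) (hρ₀ : 0 ≤ ρ) (hρ₁ : ρ ≤ 1) (K : ℕ)
    [NeZero K] {T : ℝ} (hT : 0 < T) :
    ∀ᶠ n in atTop, 1 - ρ * (4 ^ K * T) - (1 / K + Real.exp (-T)) ≤ noiseTV μ ρ n := by
  have hτ : Tendsto (fun n : ℕ => T / n) atTop (nhdsWithin 0 (Set.Ioi 0)) :=
    tendsto_nhdsWithin_iff.mpr ⟨tendsto_const_div_atTop_nhds_zero_nat T,
      (eventually_gt_atTop 0).mono fun n hn => div_pos hT (Nat.cast_pos.mpr hn)⟩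
  filter_upwards [hτ.eventually (hμ.eventually_exists_separated_characters φ hx hy hxy K),
    eventually_ne_atTop 0] with n ⟨χ, hχ⟩ hn
  have hnT : (n : ℝ) * (T / n) = T := mul_div_cancel₀ T (Nat.cast_ne_zero.mpr hn)
  have hle := hμ.le_noiseTV_of_charDefect_div_mem_Icc hρ₀ hρ₁ (by positivity) hχ n
  rwa [mul_left_comm (n : ℝ), hnT, Fintype.card_fin] at hle

end NoiseTV

section Limit

theorem tendsto_liminf_of_eventually_le {α β R : Type*} [ConditionallyCompleteLinearOrder R]
    [TopologicalSpace R] [OrderTopology R] [DenselyOrdered R] [NoMinOrder R] {l : Filter α}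
    {l' : Filter β} [l'.NeBot] {F : α → β → R} {c : R} (hle : ∀ᶠ a in l, ∀ᶠ b in l', F a b ≤ c)
    (hge : ∀ c' < c, ∀ᶠ a in l, ∀ᶠ b in l', c' ≤ F a b) :
    Tendsto (fun a => liminf (F a) l') l (nhds c) := by
  refine tendsto_order.mpr ⟨fun c' hc' => ?_, fun c' hc' => ?_⟩
  · obtain ⟨b, hcb, hbc⟩ := exists_between hc'
    filter_upwards [hle, hge b hbc] with a ha₁ ha₂
    exact hcb.trans_le (le_liminf_of_le (isCoboundedUnder_ge_of_eventually_le l' ha₁) ha₂)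
  · obtain ⟨b, hbc⟩ := exists_lt c
    filter_upwards [hle, hge b hbc] with a ha₁ ha₂
    refine (liminf_le_of_le ⟨b, ha₂⟩ fun b' hb' => ?_).trans_lt hc'
    obtain ⟨i, hi₁, hi₂⟩ := (ha₁.and hb').exists
    exact hi₂.trans hi₁

variable {G : Type*} [Group G] {μ : G → ℝ}

theorem IsProb.tendsto_liminf_noiseTV (hμ : IsProb μ) (φ : G →* Multiplicative ℝ) {x y : G}
    (hx : 0 < μ x) (hy : 0 < μ y) (hxy : φ x ≠ φ y) :
    Tendsto (fun ρ => liminf (noiseTV μ ρ) atTop) (nhdsWithin 0 (Set.Ioc 0 1)) (nhds 1) := by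
  refine tendsto_liminf_of_eventually_le ?_ fun c hc => ?_
  · filter_upwards [self_mem_nhdsWithin] with ρ hρ
    exact .of_forall (hμ.noiseTV_le_one hρ.1.le hρ.2)
  have herror : Tendsto (fun k : ℕ => 1 / (k : ℝ) + Real.exp (-k)) atTop (nhds 0) := by
    simpa using tendsto_one_div_atTop_nhds_zero_nat.add
      (Real.tendsto_exp_neg_atTop_nhds_zero.comp tendsto_natCast_atTop_atTop)
  obtain ⟨k, hk, hk₀⟩ := ((herror.eventually_lt_const (sub_pos.mpr hc)).and
    (eventually_gt_atTop 0)).exists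
  have : NeZero k := ⟨hk₀.ne'⟩
  have hbound : Tendsto (fun ρ : ℝ => 1 - ρ * (4 ^ k * k) - (1 / k + Real.exp (-k)))
      (nhdsWithin 0 (Set.Ioc 0 1)) (nhds (1 - 0 * (4 ^ k * k) - (1 / k + Real.exp (-k)))) :=
    (Continuous.tendsto (by fun_prop) 0).mono_left nhdsWithin_le_nhds
  have hc_lt : c < 1 - 0 * (4 ^ k * k) - (1 / k + Real.exp (-k)) := by linarith
  filter_upwards [hbound.eventually_const_lt hc_lt, self_mem_nhdsWithin] with ρ hcρ hρ
  filter_upwards [hμ.eventually_le_noiseTV φ hx hy hxy hρ.1.le hρ.2 k (Nat.cast_pos.mpr hk₀)]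
    with n hn
  exact hcρ.le.trans hn

end Limit

theorem Nondeg.exists_map_ne {G H : Type*} [Group G] [Monoid H] [IsMulTorsionFree H] {μ : G → ℝ}
    (hnd : Nondeg μ) {φ : G →* H} (hφ : ∃ γ, φ γ ≠ 1) :
    ∃ x y, 0 < μ x ∧ 0 < μ y ∧ φ x ≠ φ y := by
  by_contra! hconst
  obtain ⟨c, hc⟩ : ∃ c, ∀ x, 0 < μ x → φ x = c := by
    by_cases hsupp : ∃ x, 0 < μ x
    · exact hsupp.imp' φ fun x hx y hy => hconst y x hy hx
    · exact ⟨1, fun x hx => (hsupp ⟨x, hx⟩).elim⟩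
  have hpow (g : G) : ∃ n ≠ 0, φ g = c ^ n := by
    induction hnd g using Subsemigroup.closure_induction with
    | mem x hx => exact ⟨1, one_ne_zero, by rw [hc x hx, pow_one]⟩
    | mul x y _ _ ihx ihy =>
      obtain ⟨k, hk, hxk⟩ := ihx
      obtain ⟨l, _, hyl⟩ := ihy
      exact ⟨k + l, by lia, by rw [map_mul, hxk, hyl, pow_add]⟩
  have hc_one : c = 1 := by
    obtain ⟨n, hn, hone⟩ := hpow 1
    rwa [map_one, eq_comm, pow_eq_one_iff_left hn] at hone
  obtain ⟨γ, hγ⟩ := hφ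
  obtain ⟨n, -, hn⟩ := hpow γ
  exact hγ (by rw [hn, hc_one, one_pow])

theorem not_noise_sensitive_of_nonzero_hom_to_int_general {G : Type*} [Group G] {μ : G → ℝ}
    (hμ : IsProb μ) (φ : G →* Multiplicative ℝ) {x y : G} (hx : 0 < μ x) (hy : 0 < μ y)
    (hxy : φ x ≠ φ y) :
    Tendsto (fun ρ => liminf (noiseTV μ ρ) atTop) (nhdsWithin 0 (Set.Ioc 0 1)) (nhds 1) ∧
      ¬ ∀ ρ, 0 < ρ → ρ ≤ 1 → Tendsto (noiseTV μ ρ) atTop (nhds 0) := by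
  have hlim := hμ.tendsto_liminf_noiseTV φ hx hy hxy
  refine ⟨hlim, fun hzero => zero_ne_one (α := ℝ) ?_⟩
  have : (nhdsWithin (0 : ℝ) (Set.Ioc 0 1)).NeBot := by
    rw [nhdsWithin_Ioc_eq_nhdsGT zero_lt_one]
    infer_instance
  refine tendsto_nhds_unique (tendsto_const_nhds.congr' ?_) hlim
  filter_upwards [self_mem_nhdsWithin] with ρ hρ
  exact (hzero ρ hρ.1 hρ.2).liminf_eq.symm

/-- If `Γ` admits a nonzero homomorphism onto `ℤ`, then
`lim_{ρ→0} liminf_n ‖π^ρ_n − μ_n×μ_n‖_TV = 1`; in particular the `μ`-random walk is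
not noise sensitive in total variation. -/
theorem not_noise_sensitive_of_nonzero_hom_to_int
    {Γ : Type*} [Group Γ] [Countable Γ] (hFG : Group.FG Γ) (hVA : VirtAbelian Γ)
    (μ : Γ → ℝ) (hμ : IsProb μ) (hmom : FinSecondMoment μ) (hnd : Nondeg μ)
    (hhom : ∃ φ : Γ →* Multiplicative ℤ, ∃ γ : Γ, φ γ ≠ 1) :
    Tendsto (fun ρ : ℝ =>
        Filter.liminf (fun n : ℕ => tv (convPow (noised μ ρ) n)
            (fun p : Γ × Γ => convPow μ n p.1 * convPow μ n p.2)) atTop)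
      (nhdsWithin 0 (Set.Ioc (0 : ℝ) 1)) (nhds 1) ∧
    ¬ (∀ ρ : ℝ, 0 < ρ → ρ ≤ 1 →
        Tendsto (fun n : ℕ => tv (convPow (noised μ ρ) n)
            (fun p : Γ × Γ => convPow μ n p.1 * convPow μ n p.2))
          atTop (nhds 0)) := by
  obtain ⟨φ, hφ⟩ := hhom
  obtain ⟨x, y, hx, hy, hxy⟩ := hnd.exists_map_ne hφ
  have hxy_real : ((φ x).toAdd : ℝ) ≠ (φ y).toAdd := Int.cast_injective.ne hxy
  exact not_noise_sensitive_of_nonzero_hom_to_int_general hμ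
    ((Int.castAddHom ℝ).toMultiplicative.comp φ) hx hy hxy_real

end NSVA
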